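/- arXiv:1408.1284 — 3 statements merged into one kernel-verified Lean document; each statement's English description precedes it below -/
import Mathlib

section
/- There exist two tuples (f^{(1)},…,f^{(s)}) and (g^{(1)},…,g^{(s)}) of linearized polynomials over F_{q^m} with deg_q(f^{(j)}) < k^{(j)} and deg_q(g^{(j)}) < k^{(j)} for all j, differing in at least one component, whose associated codewords V and V' satisfy d_S(V, V') = 2(n_t − max_{1≤j≤s} k^{(j)} + 1). Hence the minimum subspace distance of the interleaved subspace code equals 2(n_t − max_j k^{(j)} + 1). -/
/-- `P` is a linearized polynomial with respect to `q`: every nonzero coefficient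
sits at an index that is a power of `q`, i.e. `P = Σ p_i x^(q^i)`. -/
def IsLinearized (q : ℕ) {K : Type*} [Field K] (P : Polynomial K) : Prop :=
  ∀ n : ℕ, P.coeff n ≠ 0 → ∃ i : ℕ, n = q ^ i

/-- The subspace distance `d_S(U,V) = dim(U+V) − dim(U∩V)`. -/
noncomputable def subspaceDist {Fq W : Type*} [Field Fq] [AddCommGroup W] [Module Fq W]
    (U V : Submodule Fq W) : ℕ :=
  Module.finrank Fq ↥(U ⊔ V) - Module.finrank Fq ↥(U ⊓ V)

/-!
Evaluating linearized polynomials is `Fq`-linear, so a codeword is the graph of a linear map over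
the span `A` of the locators. Two graphs over `A` meet in the graph over the subspace `E` of `A` on
which the maps agree, whence the distance is `2 (dim A - dim E)`. If the `j`-th components differ,
`E` consists of roots of a nonzero polynomial of degree less than `q ^ k j`, so `dim E < k j`.
Equality is attained at a component with `k j` maximal: some nonzero linearized polynomial of
`q`-degree less than `k j` vanishes at `k j - 1` of the locators, since it has `k j` free
coefficients.
-/

section InterleavedSubspaceCode

open Module Polynomial

section GraphDistance

lemma map_inf_map_eq_map_inf_eqLocus {R V W : Type*} [Semiring R] [AddCommMonoid V]
    [AddCommMonoid W] [Module R V] [Module R W] {φ ψ : V →ₗ[R] W} {π : W →ₗ[R] V}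
    (hφ : Function.LeftInverse π φ) (hψ : Function.LeftInverse π ψ) (A : Submodule R V) :
    A.map φ ⊓ A.map ψ = (A ⊓ φ.eqLocus ψ).map φ := by
  ext w
  simp only [Submodule.mem_inf, Submodule.mem_map, LinearMap.mem_eqLocus]
  constructor
  · rintro ⟨⟨x, hx, rfl⟩, y, -, hxy⟩
    obtain rfl : y = x := by rw [← hψ y, hxy, hφ]
    exact ⟨y, ⟨hx, hxy.symm⟩, rfl⟩
  · rintro ⟨x, ⟨hx, hxψ⟩, rfl⟩
    exact ⟨⟨x, hx, rfl⟩, x, hx, hxψ.symm⟩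

lemma subspaceDist_map_map {F V W : Type*} [Field F] [AddCommGroup V] [AddCommGroup W]
    [Module F V] [Module F W] {φ ψ : V →ₗ[F] W} {π : W →ₗ[F] V}
    (hφ : Function.LeftInverse π φ) (hψ : Function.LeftInverse π ψ) (A : Submodule F V)
    [FiniteDimensional F A] :
    subspaceDist (A.map φ) (A.map ψ) =
      2 * (finrank F A - finrank F ↥(A ⊓ φ.eqLocus ψ)) := by
  have finrank_map {χ : V →ₗ[F] W} (hχ : Function.LeftInverse π χ) (B : Submodule F V) :
      finrank F (B.map χ) = finrank F B :=
    (B.equivMapOfInjective χ hχ.injective).finrank_eq.symm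
  have h_inf : finrank F ↥(A.map φ ⊓ A.map ψ) = finrank F ↥(A ⊓ φ.eqLocus ψ) := by
    rw [map_inf_map_eq_map_inf_eqLocus hφ hψ, finrank_map hφ]
  have h_sup := Submodule.finrank_sup_add_finrank_inf_eq (A.map φ) (A.map ψ)
  rw [finrank_map hφ, finrank_map hψ, h_inf] at h_sup
  rw [subspaceDist, h_inf]
  lia

end GraphDistance

section LinearizedPolynomial

variable {Fq K : Type*} [Field Fq] [Fintype Fq] [Field K] [Algebra Fq K]

lemma frobeniusAlgHom_pow_apply {R : Type*} [CommRing R] [Algebra Fq R] (i : ℕ) (x : R) :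
    (FiniteField.frobeniusAlgHom Fq R ^ i) x = x ^ Fintype.card Fq ^ i := by
  rw [AlgHom.coe_pow, FiniteField.coe_frobeniusAlgHom, pow_iterate]

namespace IsLinearized

lemma eval_add {P : K[X]} (hP : IsLinearized (Fintype.card Fq) P) (x y : K) :
    P.eval (x + y) = P.eval x + P.eval y := by
  simp only [eval_eq_sum, Polynomial.sum, ← Finset.sum_add_distrib]
  refine Finset.sum_congr rfl fun n hn ↦ ?_
  obtain ⟨i, rfl⟩ := hP n (mem_support_iff.mp hn)
  simp only [← frobeniusAlgHom_pow_apply (Fq := Fq), map_add, mul_add]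

lemma eval_smul {P : K[X]} (hP : IsLinearized (Fintype.card Fq) P) (c : Fq) (x : K) :
    P.eval (c • x) = c • P.eval x := by
  simp only [eval_eq_sum, Polynomial.sum, Finset.smul_sum]
  refine Finset.sum_congr rfl fun n hn ↦ ?_
  obtain ⟨i, rfl⟩ := hP n (mem_support_iff.mp hn)
  simp only [← frobeniusAlgHom_pow_apply (Fq := Fq), map_smul, mul_smul_comm]

end IsLinearized

variable (K) in
/-- The linearized polynomials of `q`-degree less than `k`, as a subspace of `K[X]`; a `q`-degree
less than `k` is a degree less than `q ^ k`. -/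
def linearizedLT (q k : ℕ) : Submodule K K[X] where
  carrier := {P | IsLinearized q P ∧ P.degree < ((q ^ k : ℕ) : WithBot ℕ)}
  zero_mem' := ⟨fun n hn ↦ absurd (coeff_zero n) hn, by
    rw [degree_zero]
    exact WithBot.bot_lt_coe _⟩
  add_mem' := by
    rintro P Q ⟨hP, hPdeg⟩ ⟨hQ, hQdeg⟩
    refine ⟨fun n hn ↦ ?_, (degree_add_le P Q).trans_lt (max_lt hPdeg hQdeg)⟩
    by_cases hPn : P.coeff n = 0
    · exact hQ n (by simpa [hPn] using hn)
    · exact hP n hPn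
  smul_mem' := fun c P ⟨hP, hPdeg⟩ ↦
    ⟨fun n hn ↦ hP n fun hPn ↦ hn (by simp [hPn]), (degree_smul_le c P).trans_lt hPdeg⟩

lemma X_pow_mem_linearizedLT {q k i : ℕ} (hq : 1 < q) (hi : i < k) :
    X ^ q ^ i ∈ linearizedLT K q k := by
  refine ⟨fun n hn ↦ ⟨i, ?_⟩, ?_⟩
  · by_contra hni
    exact hn (by simp [coeff_X_pow, hni])
  · rw [degree_X_pow]
    exact_mod_cast Nat.pow_lt_pow_right hq hi

lemma linearIndependent_X_pow {ι R : Type*} [Semiring R] {e : ι → ℕ} (he : Function.Injective e) :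
    LinearIndependent R fun i ↦ (X : R[X]) ^ e i := by
  simpa [Function.comp_def, X_pow_eq_monomial] using
    (basisMonomials R).linearIndependent.comp e he

lemma exists_mem_linearizedLT_eval_eq_zero {ι : Type*} [Fintype ι] {q k : ℕ} (hq : 1 < q)
    (β : ι → K) (hk : Fintype.card ι < k) :
    ∃ P ∈ linearizedLT K q k, P ≠ 0 ∧ ∀ i, P.eval (β i) = 0 := by
  let ofCoeffs : (Fin k → K) →ₗ[K] K[X] := Fintype.linearCombination K fun i ↦ X ^ q ^ (i : ℕ)
  let evalAt : K[X] →ₗ[K] ι → K := LinearMap.pi fun i ↦ leval (β i)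
  have ofCoeffs_injective : Function.Injective ofCoeffs :=
    (linearIndependent_X_pow <|
      (Nat.pow_right_injective hq).comp Fin.val_injective).fintypeLinearCombination_injective
  obtain ⟨c, hc, hc0⟩ := Submodule.exists_mem_ne_zero_of_ne_bot <|
    LinearMap.ker_ne_bot_of_finrank_lt (f := evalAt ∘ₗ ofCoeffs) (by simpa using hk)
  refine ⟨ofCoeffs c, ?_, (map_ne_zero_iff ofCoeffs ofCoeffs_injective).mpr hc0, congrFun hc⟩
  rw [Fintype.linearCombination_apply]
  exact Submodule.sum_mem _ fun i _ ↦
    Submodule.smul_mem _ _ (X_pow_mem_linearizedLT hq i.isLt)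

lemma finrank_lt_of_degree_lt_of_eval_eq_zero {F R : Type*} [Field F] [Fintype F] [CommRing R]
    [IsDomain R] [Module F R] {P : R[X]} {k : ℕ} (hP : P ≠ 0)
    (hdeg : P.degree < ((Fintype.card F ^ k : ℕ) : WithBot ℕ)) (B : Submodule F R)
    (hB : ∀ x ∈ B, P.eval x = 0) : finrank F B < k := by
  classical
  have hroots : (B : Set R) ⊆ P.roots.toFinset := fun x hx ↦ by simpa [hP] using hB x hx
  have : Finite B := P.roots.toFinset.finite_toSet.subset hroots
  rw [← Nat.pow_lt_pow_iff_right (Fintype.one_lt_card (α := F))]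
  calc Fintype.card F ^ finrank F B
      = Nat.card B := by rw [natCard_eq_pow_finrank (K := F), Nat.card_eq_fintype_card]
    _ ≤ P.roots.toFinset.card :=
      (Nat.card_mono P.roots.toFinset.finite_toSet hroots).trans_eq (Nat.card_eq_finsetCard _)
    _ ≤ P.natDegree := (Multiset.toFinset_card_le _).trans (card_roots' P)
    _ < Fintype.card F ^ k := (natDegree_lt_iff_degree_lt hP).mpr hdeg

end LinearizedPolynomial

section Codeword

variable {Fq K ι : Type*} [Field Fq] [Field K] [Algebra Fq K] {s : ℕ}

variable (Fq) in
/-- The codeword of the message `f`: the span of the vectors `(α i, f 0 (α i), …, f (s - 1) (α i))`,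
where `α` lists the code locators. -/
def interleavedCodeword (α : ι → K) (f : Fin s → K[X]) : Submodule Fq (Fin (s + 1) → K) :=
  Submodule.span Fq (Set.range fun i ↦ Fin.cons (α i) fun j ↦ (f j).eval (α i))

variable [Fintype Fq] {f g : Fin s → K[X]} {α : ι → K}

section Agreement

variable (hf : ∀ j, IsLinearized (Fintype.card Fq) (f j))
  (hg : ∀ j, IsLinearized (Fintype.card Fq) (g j))

/-- The map `x ↦ (x, f 0 x, …, f (s - 1) x)` parametrizing the graph of a tuple of linearized
polynomials, as an `Fq`-linear map. -/
def interleavedEval : K →ₗ[Fq] Fin (s + 1) → K where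
  toFun x := Fin.cons x fun j ↦ (f j).eval x
  map_add' x y := by
    ext l
    cases l using Fin.cases <;> simp [(hf _).eval_add]
  map_smul' c x := by
    ext l
    cases l using Fin.cases <;> simp [(hf _).eval_smul]

/-- The subspace of the span of the locators on which two messages agree. It is isomorphic to the
intersection of their codewords. -/
def agreementSubspace (α : ι → K) : Submodule Fq K :=
  Submodule.span Fq (Set.range α) ⊓ (interleavedEval hf).eqLocus (interleavedEval hg)

variable (α) in
lemma interleavedCodeword_eq_map :
    interleavedCodeword Fq α f = (Submodule.span Fq (Set.range α)).map (interleavedEval hf) := by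
  rw [Submodule.map_span, ← Set.range_comp]
  rfl

lemma mem_agreementSubspace {x : K} :
    x ∈ agreementSubspace hf hg α ↔
      x ∈ Submodule.span Fq (Set.range α) ∧ ∀ j, (f j).eval x = (g j).eval x := by
  simp [agreementSubspace, interleavedEval, funext_iff, Fin.forall_fin_succ]

variable (α) in
lemma finrank_agreementSubspace_lt {j : Fin s} {k : ℕ} (hfg : f j ≠ g j)
    (hfdeg : (f j).degree < ((Fintype.card Fq ^ k : ℕ) : WithBot ℕ))
    (hgdeg : (g j).degree < ((Fintype.card Fq ^ k : ℕ) : WithBot ℕ)) :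
    finrank Fq (agreementSubspace hf hg α) < k := by
  refine finrank_lt_of_degree_lt_of_eval_eq_zero (sub_ne_zero.mpr hfg)
    ((degree_sub_le _ _).trans_lt (max_lt hfdeg hgdeg)) _ fun x hx ↦ ?_
  rw [eval_sub, ((mem_agreementSubspace hf hg).mp hx).2 j, sub_self]

lemma subspaceDist_interleavedCodeword [Fintype ι] (hα : LinearIndependent Fq α) :
    subspaceDist (interleavedCodeword Fq α f) (interleavedCodeword Fq α g) =
      2 * (Fintype.card ι - finrank Fq (agreementSubspace hf hg α)) := by
  have : FiniteDimensional Fq (Submodule.span Fq (Set.range α)) :=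
    .span_of_finite Fq (Set.finite_range α)
  have leftInverse_proj {h : Fin s → K[X]} (hh : ∀ j, IsLinearized (Fintype.card Fq) (h j)) :
      Function.LeftInverse (LinearMap.proj (R := Fq) (φ := fun _ ↦ K) 0) (interleavedEval hh) :=
    fun _ ↦ rfl
  rw [interleavedCodeword_eq_map α hf, interleavedCodeword_eq_map α hg,
    subspaceDist_map_map (leftInverse_proj hf) (leftInverse_proj hg), finrank_span_eq_card hα,
    agreementSubspace]

instance finiteDimensional_agreementSubspace [Finite ι] :
    FiniteDimensional Fq (agreementSubspace hf hg α) :=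
  have : FiniteDimensional Fq (Submodule.span Fq (Set.range α)) :=
    .span_of_finite Fq (Set.finite_range α)
  Submodule.finiteDimensional_inf_left _ _

lemma card_le_finrank_agreementSubspace [Finite ι] (hα : LinearIndependent Fq α)
    {S : Finset ι} (hS : ∀ i ∈ S, ∀ j, (f j).eval (α i) = (g j).eval (α i)) :
    S.card ≤ finrank Fq (agreementSubspace hf hg α) := by
  have hαS : LinearIndependent Fq fun i : S ↦ (⟨α i, (mem_agreementSubspace hf hg).mpr
      ⟨Submodule.subset_span ⟨i, rfl⟩, hS i i.2⟩⟩ : agreementSubspace hf hg α) :=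
    .of_comp (Submodule.subtype _) (hα.comp _ Subtype.val_injective)
  simpa using hαS.fintype_card_le_finrank

end Agreement

variable [Fintype ι] {k : Fin s → ℕ}

lemma le_subspaceDist_interleavedCodeword (hα : LinearIndependent Fq α)
    (hk : ∀ j, k j ≤ Fintype.card ι) (hf : ∀ j, f j ∈ linearizedLT K (Fintype.card Fq) (k j))
    (hg : ∀ j, g j ∈ linearizedLT K (Fintype.card Fq) (k j)) (hfg : f ≠ g) :
    2 * (Fintype.card ι - Finset.univ.sup k + 1) ≤
      subspaceDist (interleavedCodeword Fq α f) (interleavedCodeword Fq α g) := by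
  obtain ⟨j, hj⟩ := Function.ne_iff.mp hfg
  have hf_lin (i : Fin s) := (hf i).1
  have hg_lin (i : Fin s) := (hg i).1
  have h_finrank_lt := finrank_agreementSubspace_lt α hf_lin hg_lin hj (hf j).2 (hg j).2
  have h_le_sup : k j ≤ Finset.univ.sup k := Finset.le_sup (Finset.mem_univ j)
  have h_sup_le : Finset.univ.sup k ≤ Fintype.card ι := Finset.sup_le fun j _ ↦ hk j
  rw [subspaceDist_interleavedCodeword hf_lin hg_lin hα]
  omega

lemma exists_subspaceDist_interleavedCodeword_zero_eq (hα : LinearIndependent Fq α) {j : Fin s}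
    (hk_pos : 1 ≤ k j) (hk_le : k j ≤ Fintype.card ι) :
    ∃ f : Fin s → K[X], (∀ i, f i ∈ linearizedLT K (Fintype.card Fq) (k i)) ∧ f ≠ 0 ∧
      subspaceDist (interleavedCodeword Fq α f) (interleavedCodeword Fq α 0) =
        2 * (Fintype.card ι - k j + 1) := by
  obtain ⟨S, -, hS⟩ := Finset.exists_subset_card_eq (s := (Finset.univ : Finset ι))
    (n := k j - 1) (by rw [Finset.card_univ]; lia)
  obtain ⟨P, hP, hP0, hPα⟩ := exists_mem_linearizedLT_eval_eq_zero (k := k j)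
    (Fintype.one_lt_card (α := Fq)) (fun i : S ↦ α i) (by rw [Fintype.card_coe]; lia)
  have hf (i : Fin s) : (Pi.single j P : Fin s → K[X]) i ∈
      linearizedLT K (Fintype.card Fq) (k i) := by
    obtain rfl | hij := eq_or_ne i j
    · simpa using hP
    · simp [hij]
  have hzero (i : Fin s) : (0 : Fin s → K[X]) i ∈ linearizedLT K (Fintype.card Fq) (k i) :=
    Submodule.zero_mem _
  have h_agree : ∀ i ∈ S, ∀ l, ((Pi.single j P : Fin s → K[X]) l).eval (α i) =
      ((0 : Fin s → K[X]) l).eval (α i) := by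
    intro i hi l
    obtain rfl | hlj := eq_or_ne l j
    · simpa using hPα ⟨i, hi⟩
    · simp [hlj]
  have hf_lin (i : Fin s) := (hf i).1
  have hzero_lin (i : Fin s) := (hzero i).1
  have h_finrank_lt := finrank_agreementSubspace_lt α hf_lin hzero_lin (by simpa using hP0)
    (hf j).2 (hzero j).2
  have h_le_finrank := card_le_finrank_agreementSubspace hf_lin hzero_lin hα h_agree
  refine ⟨Pi.single j P, hf, by simpa using hP0, ?_⟩
  rw [subspaceDist_interleavedCodeword hf_lin hzero_lin hα]
  omega

end Codeword

end InterleavedSubspaceCode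

theorem minimum_subspace_distance_interleaved_general
    {Fq K ι : Type*} [Field Fq] [Fintype Fq] [Field K] [Algebra Fq K] [Fintype ι] {s : ℕ}
    {α : ι → K} (hα : LinearIndependent Fq α) {k : Fin s → ℕ}
    (hk_le : ∀ j, k j ≤ Fintype.card ι) (hk_pos : ∃ j, 1 ≤ k j) :
    IsLeast
      {d : ℕ | ∃ f g : Fin s → Polynomial K,
        (∀ j, IsLinearized (Fintype.card Fq) (f j)) ∧
        (∀ j, IsLinearized (Fintype.card Fq) (g j)) ∧
        (∀ j, (f j).degree < ((Fintype.card Fq ^ k j : ℕ) : WithBot ℕ)) ∧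
        (∀ j, (g j).degree < ((Fintype.card Fq ^ k j : ℕ) : WithBot ℕ)) ∧
        f ≠ g ∧ d = subspaceDist (interleavedCodeword Fq α f) (interleavedCodeword Fq α g)}
      (2 * (Fintype.card ι - Finset.univ.sup k + 1)) := by
  constructor
  · obtain ⟨i, hi⟩ := hk_pos
    obtain ⟨j, -, hj⟩ := Finset.exists_mem_eq_sup Finset.univ ⟨i, Finset.mem_univ i⟩ k
    have hj_pos : 1 ≤ k j := hi.trans <| hj ▸ Finset.le_sup (Finset.mem_univ i)
    obtain ⟨f, hf, hf0, hdist⟩ :=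
      exists_subspaceDist_interleavedCodeword_zero_eq hα hj_pos (hk_le j)
    have hzero (i : Fin s) := (linearizedLT K (Fintype.card Fq) (k i)).zero_mem
    exact ⟨f, 0, fun i ↦ (hf i).1, fun i ↦ (hzero i).1, fun i ↦ (hf i).2, fun i ↦ (hzero i).2,
      hf0, by rw [hdist, hj]⟩
  · rintro _ ⟨f, g, hf, hg, hfdeg, hgdeg, hfg, rfl⟩
    exact le_subspaceDist_interleavedCodeword hα hk_le (fun j ↦ ⟨hf j, hfdeg j⟩)
      (fun j ↦ ⟨hg j, hgdeg j⟩) hfg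

/-- There exist two tuples of message polynomials, differing in at least one component,
whose codewords are at subspace distance exactly `2(n_t − max_j k⁽ʲ⁾ + 1)`; hence the
minimum subspace distance of the interleaved subspace code equals this value. -/
theorem minimum_subspace_distance_interleaved
    (Fq K : Type*) [Field Fq] [Fintype Fq] [Field K] [Algebra Fq K]
    (q m s nt : ℕ) (hq : Fintype.card Fq = q) (hm : 0 < m)
    (hK : Module.finrank Fq K = m) (hnt : nt ≤ m) (hs : 1 ≤ s)
    (α : Fin nt → K) (hα : LinearIndependent Fq α)
    (k : Fin s → ℕ) (hk : ∀ j, 1 ≤ k j ∧ k j < nt) :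
    IsLeast
      {d : ℕ | ∃ f g : Fin s → Polynomial K,
        (∀ j, IsLinearized q (f j)) ∧ (∀ j, IsLinearized q (g j)) ∧
        (∀ j, (f j).degree < ((q ^ k j : ℕ) : WithBot ℕ)) ∧
        (∀ j, (g j).degree < ((q ^ k j : ℕ) : WithBot ℕ)) ∧
        f ≠ g ∧
        d = subspaceDist
          (Submodule.span Fq
            (Set.range fun i : Fin nt =>
              (Fin.cons (α i) (fun j : Fin s => (f j).eval (α i)) : Fin (s + 1) → K)))
          (Submodule.span Fq
            (Set.range fun i : Fin nt =>
              (Fin.cons (α i) (fun j : Fin s => (g j).eval (α i)) : Fin (s + 1) → K)))}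
      (2 * (nt - Finset.univ.sup k + 1)) := by
  subst hq
  simpa only [Fintype.card_fin, interleavedCodeword] using
    minimum_subspace_distance_interleaved_general hα
      (fun j ↦ (hk j).2.le.trans_eq (Fintype.card_fin nt).symm) ⟨⟨0, hs⟩, (hk _).1⟩
end

section
/- Let s ≥ 1 and let n_t, k, δ, γ, τ be integers with n_r := n_t − δ + γ, 1 ≤ k ≤ n_r − τ, 0 ≤ γ ≤ min(τ, n_r), and let R be the n_r × ((n_r−τ) + s(n_r−τ−k+1)) matrix over F_{q^m} whose i-th row is ( x_i^{q^0}, …, x_i^{q^{n_r−τ−1}}, (r_i^{(1)})^{q^0}, …, (r_i^{(1)})^{q^{n_r−τ−k}}, …, (r_i^{(s)})^{q^0}, …, (r_i^{(s)})^{q^{n_r−τ−k}} ), where r_i^{(j)} = f^{(j)}(x_i) for all 0 ≤ i < n_r − γ and all j, for some linearized polynomials f^{(j)} of q-degree < k. Then the dimension over F_{q^m} of the right kernel { v : R·v = 0 } is at least s(n_t − k − δ − τ + 1) + (s−1)γ. -/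
/-!
On an uncorrupted row the entry `r_i^(j)` raised to `q ^ b` is the value at `x_i` of `f_j ^ q ^ b`.
By additivity of the Frobenius this polynomial is again linearized, of `q`-degree less than `k + b`,
so its values are a fixed linear combination of the powers `x_i ^ q ^ a`. Column operations with
these combinations therefore clear the `r`-columns outside the `γ` corrupted rows, leaving a block
of rank at most `γ`, and every vector in the kernel of that block lifts to the kernel of `R`.
-/

section

open Matrix Polynomial

variable {K : Type*} [Field K]

namespace IsLinearized

theorem pow_pow {p e : ℕ} [ExpChar K p] {f : K[X]}
    (hf : IsLinearized (p ^ e) f) (b : ℕ) : IsLinearized (p ^ e) (f ^ (p ^ e) ^ b) := by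
  intro n hn
  have hpos : 0 < p ^ (e * b) := pow_pos (expChar_pos K p) _
  rw [← pow_mul, ← map_iterateFrobenius_expand p f (e * b), coeff_map, coeff_expand hpos] at hn
  split_ifs at hn with hdvd
  · obtain ⟨i, hi⟩ := hf _ (ne_zero_of_map hn)
    refine ⟨i + b, ?_⟩
    rw [pow_add, ← hi, ← pow_mul p e b, Nat.div_mul_cancel hdvd]
  · exact absurd (map_zero _) hn

theorem eval_eq_sum {q N : ℕ} (hq : 1 < q) {f : K[X]} (hf : IsLinearized q f)
    (hdeg : f.natDegree < q ^ N) (y : K) :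
    f.eval y = ∑ a : Fin N, f.coeff (q ^ (a : ℕ)) * y ^ q ^ (a : ℕ) := by
  rw [eval_eq_sum_range' hdeg]
  symm
  refine Finset.sum_of_injOn (fun a : Fin N => q ^ (a : ℕ))
    (fun a _ b _ hab => Fin.ext (Nat.pow_right_injective hq hab)) ?_ ?_ fun _ _ => rfl
  · intro a _
    simpa using Nat.pow_lt_pow_right hq a.isLt
  · intro n hn hna
    suffices f.coeff n = 0 by rw [this, zero_mul]
    by_contra hc
    obtain ⟨i, rfl⟩ := hf n hc
    have hi : i < N := (Nat.pow_lt_pow_iff_right hq).1 (Finset.mem_range.1 hn)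
    exact hna ⟨⟨i, hi⟩, Finset.mem_coe.2 (Finset.mem_univ _), rfl⟩

end IsLinearized

/-- The `q`-Moore matrix with `N` columns, whose `i`-th row is
`(x_i, x_i ^ q, …, x_i ^ q ^ (N - 1))`. -/
def mooreMatrix {R ι : Type*} [Monoid R] (q N : ℕ) (x : ι → R) : Matrix ι (Fin N) R :=
  of fun i a => x i ^ q ^ (a : ℕ)

/-- The matrix whose `j`-th column is the coefficient vector of `g j`, read as a linearized
polynomial of `q`-degree less than `N`; coefficients at exponents other than `q ^ a` are ignored. -/
def linearizedCoeffMatrix {R κ : Type*} [Semiring R] (q N : ℕ) (g : κ → R[X]) :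
    Matrix (Fin N) κ R :=
  of fun a j => (g j).coeff (q ^ (a : ℕ))

/-- The interpolation matrix: the Moore matrix of `x` with `N` columns, followed, for each `j`, by
the Moore matrix of `r · j` with `D` columns. The column `(j, b)` of the second block holds
`r i j ^ q ^ b`. -/
def interpolationMatrix {R ι σ : Type*} [Monoid R] (q N D : ℕ) (x : ι → R) (r : ι → σ → R) :
    Matrix ι (Fin N ⊕ σ × Fin D) R :=
  fromCols (mooreMatrix q N x) (of fun i p => mooreMatrix q D (r · p.1) i p.2)

theorem mooreMatrix_mul_linearizedCoeffMatrix {ι κ : Type*} {q N : ℕ} (hq : 1 < q) (x : ι → K)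
    {g : κ → K[X]} (hg : ∀ j, IsLinearized q (g j)) (hdeg : ∀ j, (g j).natDegree < q ^ N) :
    mooreMatrix q N x * linearizedCoeffMatrix q N g = of fun i j => (g j).eval (x i) := by
  ext i j
  simp only [mooreMatrix, linearizedCoeffMatrix, mul_apply, of_apply,
    (hg j).eval_eq_sum hq (hdeg j), mul_comm]

theorem card_le_finrank_ker_fromCols_add_rank_sub_mul {ι κ₁ κ₂ : Type*} [Fintype κ₁] [Fintype κ₂]
    (A : Matrix ι κ₁ K) (B : Matrix ι κ₂ K) (T : Matrix κ₁ κ₂ K) :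
    Fintype.card κ₂ ≤
      Module.finrank K (LinearMap.ker (fromCols A B).mulVecLin) + (B - A * T).rank := by
  classical
  let lift : (κ₂ → K) →ₗ[K] (κ₁ ⊕ κ₂ → K) := (fromRows (-T) 1).mulVecLin
  have lift_inr (w : κ₂ → K) : lift w ∘ Sum.inr = w := by
    simp [lift, fromRows_mulVec]
  have lift_injective : Function.Injective lift := fun v w h => by
    rw [← lift_inr v, h, lift_inr w]
  have comp_lift : (fromCols A B).mulVecLin ∘ₗ lift = (B - A * T).mulVecLin := by
    rw [← mulVecLin_mul, fromCols_mul_fromRows, Matrix.mul_neg, Matrix.mul_one, neg_add_eq_sub]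
  have lift_mem (w) (hw : w ∈ LinearMap.ker (B - A * T).mulVecLin) :
      lift w ∈ LinearMap.ker (fromCols A B).mulVecLin := by
    rwa [← comp_lift] at hw
  have ker_le := LinearMap.finrank_le_finrank_of_injective (f := lift.restrict lift_mem)
    fun v w h => Subtype.ext (lift_injective (congrArg Subtype.val h))
  calc Fintype.card κ₂
      = (B - A * T).rank + Module.finrank K (LinearMap.ker (B - A * T).mulVecLin) := by
        rw [Matrix.rank, LinearMap.finrank_range_add_finrank_ker, Module.finrank_pi]
    _ ≤ _ := by rw [add_comm]; gcongr

theorem card_mul_le_finrank_ker_interpolationMatrix_add_card {ι σ : Type*} [Fintype σ]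
    {p e : ℕ} [ExpChar K p] (hq : 1 < p ^ e) {k N D : ℕ} (hkD : k + D ≤ N + 1)
    {x : ι → K} {r : ι → σ → K} {f : σ → K[X]} (hf : ∀ j, IsLinearized (p ^ e) (f j))
    (hdeg : ∀ j, (f j).natDegree < (p ^ e) ^ k) (corrupted : Finset ι)
    (hagree : ∀ i ∉ corrupted, ∀ j, r i j = (f j).eval (x i)) :
    Fintype.card σ * D ≤
      Module.finrank K (LinearMap.ker (interpolationMatrix (p ^ e) N D x r).mulVecLin) +
        corrupted.card := by
  let g : σ × Fin D → K[X] := fun c => f c.1 ^ (p ^ e) ^ (c.2 : ℕ)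
  have hg (c) : IsLinearized (p ^ e) (g c) := (hf c.1).pow_pow c.2
  have hgdeg (c) : (g c).natDegree < (p ^ e) ^ N := by
    calc (g c).natDegree = (p ^ e) ^ (c.2 : ℕ) * (f c.1).natDegree := natDegree_pow _ _
      _ < (p ^ e) ^ (c.2 : ℕ) * (p ^ e) ^ k := by gcongr; exact hdeg c.1
      _ = (p ^ e) ^ (c.2 + k) := (pow_add _ _ _).symm
      _ ≤ (p ^ e) ^ N := Nat.pow_le_pow_right hq.le (by omega)
  let A := mooreMatrix (p ^ e) N x
  let B : Matrix ι (σ × Fin D) K := of fun i c => mooreMatrix (p ^ e) D (r · c.1) i c.2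
  let T := linearizedCoeffMatrix (p ^ e) N g
  have rank_le : (B - A * T).rank ≤ corrupted.card := by
    refine rank_le_card_of_support_subset _ _ (Function.support_subset_iff'.2 fun i hi => ?_)
    ext c
    have entry_eq : B i c = (g c).eval (x i) := by
      simp only [B, g, mooreMatrix, of_apply, eval_pow, hagree i hi]
    change B i c - (A * T) i c = 0
    rw [mooreMatrix_mul_linearizedCoeffMatrix hq x hg hgdeg, entry_eq, of_apply, sub_self]
  calc Fintype.card σ * D = Fintype.card (σ × Fin D) := by
        rw [Fintype.card_prod, Fintype.card_fin]
    _ ≤ Module.finrank K (LinearMap.ker (fromCols A B).mulVecLin) + (B - A * T).rank :=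
        card_le_finrank_ker_fromCols_add_rank_sub_mul A B T
    _ ≤ _ := Nat.add_le_add_left rank_le _

theorem finrank_ker_interpolation_matrix_ge_general
    {p e : ℕ} [ExpChar K p] (hq : 1 < p ^ e)
    {s nt k δ γ τ nr : ℕ} (hδ : δ ≤ nt) (hnr : nr = nt - δ + γ) (hkτ : k + τ ≤ nr)
    {x : Fin nr → K} {r : Fin nr → Fin s → K} {f : Fin s → K[X]}
    (hfl : ∀ j, IsLinearized (p ^ e) (f j))
    (hfd : ∀ j, (f j).degree < (((p ^ e) ^ k : ℕ) : WithBot ℕ))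
    (hagree : ∀ i : Fin nr, (i : ℕ) < nr - γ → ∀ j, r i j = (f j).eval (x i)) :
    (s : ℤ) * ((nt : ℤ) - k - δ - τ + 1) + ((s : ℤ) - 1) * γ ≤
      Module.finrank K (LinearMap.ker
        (interpolationMatrix (p ^ e) (nr - τ) (nr - τ - k + 1) x r).mulVecLin) := by
  have hdeg (j) : (f j).natDegree < (p ^ e) ^ k :=
    (WithBot.unbotD_lt_iff fun _ => pow_pos (zero_lt_one.trans hq) k).2 (hfd j)
  let corrupted := ({i | (i : ℕ) < nr - γ} : Finset (Fin nr))ᶜ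
  have card_corrupted : corrupted.card = γ := by
    rw [Finset.card_compl, Fintype.card_fin, Fin.card_filter_val_lt]
    omega
  have card_le := card_mul_le_finrank_ker_interpolationMatrix_add_card hq
    (by omega : k + (nr - τ - k + 1) ≤ nr - τ + 1) hfl hdeg corrupted
    fun i hi => hagree i ((Finset.mem_filter_univ i).1 (Finset.notMem_compl.1 hi))
  rw [Fintype.card_fin, card_corrupted] at card_le
  have width : ((nr - τ - k + 1 : ℕ) : ℤ) = (nt : ℤ) - k - δ - τ + 1 + γ := by omega
  rw [← Nat.cast_le (α := ℤ), Nat.cast_add, Nat.cast_mul, width] at card_le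
  linarith

end

/-- Dimension of the solution space of the interpolation problem: the right kernel
of the interpolation matrix `R` has dimension at least
`s(n_t − k − δ − τ + 1) + (s−1)γ`. -/
theorem finrank_ker_interpolation_matrix_ge
    (K : Type*) [Field K] [Fintype K]
    (q m : ℕ) (hq : IsPrimePow q) (hm : 0 < m) (hcard : Fintype.card K = q ^ m)
    (s nt k δ γ τ nr : ℕ) (hs : 1 ≤ s) (hδ : δ ≤ nt) (hnr : nr = nt - δ + γ)
    (hk : 1 ≤ k) (hkτ : k + τ ≤ nr) (hγτ : γ ≤ τ) (hγnr : γ ≤ nr)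
    (x : Fin nr → K) (r : Fin nr → Fin s → K)
    (f : Fin s → Polynomial K)
    (hfl : ∀ j, IsLinearized q (f j))
    (hfd : ∀ j, (f j).degree < ((q ^ k : ℕ) : WithBot ℕ))
    (hagree : ∀ i : Fin nr, (i : ℕ) < nr - γ → ∀ j, r i j = (f j).eval (x i)) :
    (s : ℤ) * ((nt : ℤ) - k - δ - τ + 1) + ((s : ℤ) - 1) * γ ≤
      (Module.finrank K
        ↥(LinearMap.ker
          (Matrix.mulVecLin
            (Matrix.of fun (i : Fin nr) (c : Fin (nr - τ) ⊕ Fin s × Fin (nr - τ - k + 1)) =>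
              Sum.elim (fun a : Fin (nr - τ) => x i ^ q ^ (a : ℕ))
                (fun p : Fin s × Fin (nr - τ - k + 1) => r i p.1 ^ q ^ (p.2 : ℕ)) c))) : ℤ) := by
  have one_lt_q := hq.one_lt
  obtain ⟨p, e, hp, -, rfl⟩ := hq
  have : Fact p.Prime := ⟨hp.nat_prime⟩
  have : CharP K p := charP_of_card_eq_prime_pow (hcard.trans (pow_mul p e m).symm)
  exact finrank_ker_interpolation_matrix_ge_general one_lt_q hδ hnr hkτ hfl hfd hagree
end

section
/- Let d_I ≥ s ≥ 1, k ≥ 1, L ≥ k be integers, and fix arbitrary elements q^{(h)}_{j,ℓ} ∈ F_{q^m} for 1 ≤ h ≤ d_I, 1 ≤ j ≤ s, 0 ≤ ℓ < L−k. For each matrix B ∈ F_{q^m}^{d_I × s}, set q^{(h)}_{j,L−k} := B_{h,j} and let Q(B) be the (L·d_I) × (s·k) block matrix whose block in block-row a (0 ≤ a < L) and block-column b (0 ≤ b < k) equals Q_{a−b}^{[−a]} if 0 ≤ a−b ≤ L−k and zero otherwise, where Q_ℓ is the d_I × s matrix with entries q^{(h)}_{j,ℓ} and [i] denotes entrywise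 application of the i-th Frobenius power. Then the number of B ∈ F_{q^m}^{d_I × s} with rank(Q(B)) < s·k is at most 4·q^{m·d_I·s}·q^{−m(d_I+1−s)}; equivalently, for B uniformly random, P(rank(Q(B)) < sk) ≤ 4·q^{−m(d_I+1−s)}. -/
/-!
If `v ≠ 0` lies in the kernel of `Q(B)` and `b` is the last block-column on which `v` does not
vanish, then block-row `b + (L - k)` of `Q(B) v = 0` involves only the diagonal block, a Frobenius
twist of `B`; untwisting gives a nonzero vector in the kernel of `B`. Hence `Q(B)` has full column
rank as soon as `B` has. A nonzero vector is annihilated by exactly `N ^ (d_I (s - 1))` matrices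
over a field with `N` elements, so a union bound over the `1 + N + ⋯ + N ^ (s - 1)` lines of `K ^ s`
bounds the number of `B` of deficient rank.
-/

open Matrix Finset
open scoped LinearAlgebra.Projectivization

section Counting

theorem mulVec_surjective_left {D m n : Type*} [DivisionRing D] [Fintype n] {w : n → D}
    (hw : w ≠ 0) : Function.Surjective fun B : Matrix m n D => B *ᵥ w := by
  classical
  intro u
  obtain ⟨j, hj⟩ := Function.ne_iff.mp hw
  refine ⟨vecMulVec u (Pi.single j (w j)⁻¹), ?_⟩
  simp [vecMulVec_mulVec, inv_mul_cancel₀ hj]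

variable {K m n : Type*} [Field K] [Fintype n]

theorem rank_lt_card_iff_exists_mulVec_eq_zero (A : Matrix m n K) :
    A.rank < Fintype.card n ↔ ∃ w ≠ 0, A *ᵥ w = 0 := by
  have rank_nullity : A.rank + Module.finrank K A.mulVecLin.ker = Fintype.card n := by
    simpa [Matrix.rank] using A.mulVecLin.finrank_range_add_finrank_ker
  calc A.rank < Fintype.card n
    _ ↔ 1 ≤ Module.finrank K A.mulVecLin.ker := by omega
    _ ↔ ∃ w ≠ 0, A *ᵥ w = 0 := by
      rw [Submodule.one_le_finrank_iff, Submodule.ne_bot_iff]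
      simp [and_comm]

variable [Fintype m]

theorem natCard_mulVec_eq_zero {w : n → K} (hw : w ≠ 0) :
    Nat.card {B : Matrix m n K // B *ᵥ w = 0} =
      Nat.card K ^ (Fintype.card m * (Fintype.card n - 1)) := by
  let evalAt : Matrix m n K →ₗ[K] m → K := (mulVecBilin K K).flip w
  have range_eq_top : evalAt.range = ⊤ := LinearMap.range_eq_top.mpr (mulVec_surjective_left hw)
  have rank_nullity : Fintype.card m + Module.finrank K evalAt.ker =
      Fintype.card m * Fintype.card n := by
    have := evalAt.finrank_range_add_finrank_ker
    rwa [range_eq_top, finrank_top, Module.finrank_fintype_fun_eq_card, Module.finrank_matrix,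
      Module.finrank_self, mul_one] at this
  calc Nat.card {B : Matrix m n K // B *ᵥ w = 0}
    _ = Nat.card evalAt.ker := rfl
    _ = Nat.card K ^ Module.finrank K evalAt.ker := Module.natCard_eq_pow_finrank
    _ = _ := by rw [Nat.mul_sub_one, ← rank_nullity, Nat.add_sub_cancel_left]

theorem natCard_rank_lt_card_le [Finite K] :
    Nat.card {B : Matrix m n K // B.rank < Fintype.card n} ≤
      (∑ i ∈ range (Fintype.card n), Nat.card K ^ i) *
        Nat.card K ^ (Fintype.card m * (Fintype.card n - 1)) := by
  have : Fintype (ℙ K (n → K)) := Fintype.ofFinite _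
  have subset_iUnion : {B : Matrix m n K | B.rank < Fintype.card n} ⊆
      ⋃ p : ℙ K (n → K), {B | B *ᵥ p.rep = 0} := by
    intro B hB
    obtain ⟨w, hw, hBw⟩ := (rank_lt_card_iff_exists_mulVec_eq_zero B).mp hB
    obtain ⟨a, ha⟩ := Projectivization.exists_smul_eq_mk_rep K w hw
    refine Set.mem_iUnion.mpr ⟨Projectivization.mk K w hw, ?_⟩
    rw [Set.mem_ofPred_eq, ← ha, Units.smul_def, mulVec_smul, hBw, smul_zero]
  calc Nat.card {B : Matrix m n K // B.rank < Fintype.card n}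
    _ ≤ (⋃ p : ℙ K (n → K), {B : Matrix m n K | B *ᵥ p.rep = 0}).ncard :=
      Set.ncard_le_ncard subset_iUnion
    _ ≤ ∑ p : ℙ K (n → K), {B : Matrix m n K | B *ᵥ p.rep = 0}.ncard :=
      Set.ncard_iUnion_le_of_fintype _
    _ = ∑ _p : ℙ K (n → K), Nat.card K ^ (Fintype.card m * (Fintype.card n - 1)) :=
      sum_congr rfl fun p _ => natCard_mulVec_eq_zero p.rep_nonzero
    _ = _ := by
      rw [sum_const, card_univ, smul_eq_mul, ← Nat.card_eq_fintype_card,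
        Projectivization.card_of_finrank K _ (Module.finrank_fintype_fun_eq_card K)]

end Counting

section RootFinding

variable {R m n : Type*} {L : ℕ}

/-- The root-finding matrix with blocks `Q 0, …, Q d`: block-row `a` and block-column `b < k` hold
`Q (a - b)` twisted entrywise by `τ a` when `0 ≤ a - b ≤ d`, and zero otherwise. In the decoder
`τ a` is the Frobenius power `[-a]` and `d = L - k`. -/
def rootFindingMatrix [Semiring R] (τ : Fin L → RingAut R) (k d : ℕ) (Q : ℕ → Matrix m n R) :
    Matrix (Fin L × m) (Fin k × n) R :=
  Matrix.of fun p c =>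
    if (c.1 : ℕ) ≤ p.1 ∧ (p.1 : ℕ) - c.1 ≤ d then τ p.1 (Q (p.1 - c.1) p.2 c.2) else 0

variable [Fintype n] {k d : ℕ}

theorem rootFindingMatrix_mulVec_apply [Semiring R] (τ : Fin L → RingAut R)
    (Q : ℕ → Matrix m n R) {v : Fin k × n → R} {a : Fin L} {b : Fin k} (hab : (a : ℕ) = b + d)
    (hv : ∀ b' > b, ∀ j, v (b', j) = 0) (i : m) :
    (rootFindingMatrix τ k d Q *ᵥ v) (a, i) =
      τ a ((Q d *ᵥ fun j => (τ a).symm (v (b, j))) i) := by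
  have off_diagonal : ∀ b' ≠ b, ∑ j, rootFindingMatrix τ k d Q (a, i) (b', j) * v (b', j) = 0 := by
    intro b' hb'
    refine sum_eq_zero fun j _ => ?_
    rcases hb'.lt_or_gt with hlt | hgt
    · have below_band : ¬ ((b' : ℕ) ≤ a ∧ (a : ℕ) - b' ≤ d) := by omega
      rw [rootFindingMatrix, Matrix.of_apply, if_neg below_band, zero_mul]
    · rw [hv b' hgt, mul_zero]
  calc (rootFindingMatrix τ k d Q *ᵥ v) (a, i)
    _ = ∑ b', ∑ j, rootFindingMatrix τ k d Q (a, i) (b', j) * v (b', j) :=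
      Fintype.sum_prod_type _
    _ = ∑ j, rootFindingMatrix τ k d Q (a, i) (b, j) * v (b, j) :=
      Fintype.sum_eq_single b off_diagonal
    _ = ∑ j, τ a (Q d i j) * v (b, j) := by simp [rootFindingMatrix, hab, add_comm]
    _ = τ a ((Q d *ᵥ fun j => (τ a).symm (v (b, j))) i) := by simp [mulVec, dotProduct]

theorem eq_zero_of_rootFindingMatrix_mulVec_eq_zero [Semiring R] (hL : k + d ≤ L)
    (τ : Fin L → RingAut R) {Q : ℕ → Matrix m n R} (hQ : ∀ w, Q d *ᵥ w = 0 → w = 0)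
    {v : Fin k × n → R} (hv : rootFindingMatrix τ k d Q *ᵥ v = 0) : v = 0 := by
  have block_eq_zero (b : Fin k) : ∀ j, v (b, j) = 0 := by
    induction b using WellFoundedGT.induction with
    | ind b ih =>
      let a : Fin L := ⟨b + d, by omega⟩
      have untwisted_eq_zero : (fun j => (τ a).symm (v (b, j))) = 0 := by
        refine hQ _ (funext fun i => (τ a).injective ?_)
        rw [← rootFindingMatrix_mulVec_apply τ Q rfl ih i, hv, Pi.zero_apply, Pi.zero_apply,
          map_zero]
      intro j
      simpa using congrFun untwisted_eq_zero j
  exact funext fun p => block_eq_zero p.1 p.2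

theorem rank_lt_of_rank_rootFindingMatrix_lt [Field R] (hL : k + d ≤ L) {τ : Fin L → RingAut R}
    {Q : ℕ → Matrix m n R}
    (h : (rootFindingMatrix τ k d Q).rank < Fintype.card n * k) :
    (Q d).rank < Fintype.card n := by
  have hcard : Fintype.card (Fin k × n) = Fintype.card n * k := by simp [mul_comm]
  rw [← hcard, rank_lt_card_iff_exists_mulVec_eq_zero] at h
  obtain ⟨v, hv, hMv⟩ := h
  rw [rank_lt_card_iff_exists_mulVec_eq_zero]
  by_contra! hQ
  exact hv (eq_zero_of_rootFindingMatrix_mulVec_eq_zero hL τ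
    (fun w hw => by_contra fun hne => hQ w hne hw) hMv)

end RootFinding

theorem geom_sum_mul_pow_le {N s d : ℕ} (hN : 2 ≤ N) (hs : 1 ≤ s) (hsd : s ≤ d + 1) :
    (∑ i ∈ range s, N ^ i) * N ^ (d * (s - 1)) ≤ 2 * N ^ (d * s - (d + 1 - s)) := by
  obtain ⟨t, rfl⟩ := Nat.exists_eq_add_of_le' hs
  have geom_sum_le : ∑ i ∈ range (t + 1), N ^ i ≤ 2 * N ^ t := by
    have := Nat.geomSum_lt hN fun i (hi : i ∈ range t) => mem_range.mp hi
    rw [sum_range_succ]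
    omega
  have exponent_eq : d * (t + 1) - (d + 1 - (t + 1)) = t + d * t := by
    rw [Nat.mul_succ]
    omega
  calc (∑ i ∈ range (t + 1), N ^ i) * N ^ (d * (t + 1 - 1))
    _ ≤ 2 * N ^ t * N ^ (d * t) := Nat.mul_le_mul_right _ geom_sum_le
    _ = 2 * N ^ (d * (t + 1) - (d + 1 - (t + 1))) := by rw [exponent_eq, pow_add, mul_assoc]

theorem card_root_finding_failure_le_general {K m n : Type*} [Field K] [Finite K] [Fintype m]
    [Fintype n] {k d L : ℕ} (hL : k + d ≤ L) (τ : Fin L → RingAut K) (Q : ℕ → Matrix m n K) :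
    Nat.card {B : Matrix m n K //
      (rootFindingMatrix τ k d fun ℓ =>
        Matrix.of fun i j => if ℓ = d then B i j else Q ℓ i j).rank < Fintype.card n * k} ≤
      (∑ i ∈ range (Fintype.card n), Nat.card K ^ i) *
        Nat.card K ^ (Fintype.card m * (Fintype.card n - 1)) := by
  refine le_trans ?_ natCard_rank_lt_card_le
  refine Nat.card_mono (Set.toFinite _) fun B hB => ?_
  have rank_leading_lt := rank_lt_of_rank_rootFindingMatrix_lt hL hB
  simp only [if_true] at rank_leading_lt
  exact rank_leading_lt

/-- Fraction of non-correctable errors: with all lower-order coefficients fixed and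
the leading coefficients collected in a matrix `B`, the number of choices of
`B ∈ F_{q^m}^{d_I × s}` for which the root-finding matrix `Q(B)` fails to have full
rank `s·k` is at most `4·q^{m·d_I·s}·q^{−m(d_I+1−s)}`; equivalently, for uniformly
random `B`, `P(rank Q(B) < sk) ≤ 4·q^{−m(d_I+1−s)}`. -/
theorem card_root_finding_failure_le
    (K : Type*) [Field K] [Fintype K]
    (q m : ℕ) (hq : IsPrimePow q) (hm : 0 < m) (hcard : Fintype.card K = q ^ m)
    (σ : RingAut K) (hσ : ∀ x : K, σ x = x ^ q)
    (dI s k L : ℕ) (hs : 1 ≤ s) (hds : s ≤ dI) (hk : 1 ≤ k) (hL : k ≤ L)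
    (qc : Fin dI → Fin s → ℕ → K) :
    Nat.card {B : Matrix (Fin dI) (Fin s) K //
      (Matrix.of fun (p : Fin L × Fin dI) (c : Fin k × Fin s) =>
        if (c.1 : ℕ) ≤ (p.1 : ℕ) ∧ (p.1 : ℕ) - (c.1 : ℕ) ≤ L - k then
          (σ ^ (-((p.1 : ℕ) : ℤ)))
            (if (p.1 : ℕ) - (c.1 : ℕ) = L - k then B p.2 c.2
             else qc p.2 c.2 ((p.1 : ℕ) - (c.1 : ℕ)))
        else 0).rank < s * k} ≤
      4 * q ^ (m * (dI * s) - m * (dI + 1 - s)) := by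
  have hN : 2 ≤ Nat.card K := Finite.one_lt_card
  have hqm : Nat.card K = q ^ m := by rw [Nat.card_eq_fintype_card, hcard]
  have general := card_root_finding_failure_le_general (Nat.add_sub_of_le hL).le
    (fun a => σ ^ (-(a : ℤ))) fun ℓ => Matrix.of fun i j => qc i j ℓ
  rw [Fintype.card_fin, Fintype.card_fin] at general
  calc _
    _ ≤ (∑ i ∈ range s, Nat.card K ^ i) * Nat.card K ^ (dI * (s - 1)) := general
    _ ≤ 2 * Nat.card K ^ (dI * s - (dI + 1 - s)) := geom_sum_mul_pow_le hN hs (by omega)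
    _ ≤ 4 * q ^ (m * (dI * s) - m * (dI + 1 - s)) := by
      rw [hqm, ← pow_mul, Nat.mul_sub]
      gcongr
      norm_num
end
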